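/- The limit distribution function F of the Calkin–Wilf tree satisfies F(x + n) = 1 − 2^(−n) + 2^(−n)·F(x) for every real x ≥ 0 and every natural number n; in particular 1 − F(x) = O(2^(−x)) as x → ∞. -/

import Mathlib

open Filter

/-- The generations of the Calkin–Wilf tree: `CW 0 = [1/1]` is the first
generation, and each generation is obtained from the previous one by replacing
each entry `x` by `x/(x+1)` and `x+1`, in this order.  Thus the `n`-th
generation of the paper is `CW (n-1)`. -/
def CW : ℕ → List ℚ
  | 0 => [1]
  | n + 1 => (CW n).flatMap (fun x => [x / (x + 1), x + 1])

open scoped Classical in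
/-- `Fcw n` is the distribution function of the `(n+1)`-st generation of the
Calkin–Wilf tree: `Fcw (n-1) x = F_n(x) = 2^(1-n) · #{j : x_j^(n) ≤ x}`. -/
noncomputable def Fcw (n : ℕ) (x : ℝ) : ℝ :=
  ((CW n).countP (fun q => decide ((q : ℝ) ≤ x))) / 2 ^ n

lemma CW_pos (n : ℕ) : ∀ q ∈ CW n, 0 < q := by
  induction n with
  | zero => simp [CW]
  | succ n ih =>
    intro q hq
    simp only [CW, List.mem_flatMap] at hq
    obtain ⟨y, hy, hq⟩ := hq
    have := ih y hy
    simp only [List.mem_cons, List.not_mem_nil, or_false] at hq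
    rcases hq with rfl | rfl <;> positivity

lemma CW_length (n : ℕ) : (CW n).length = 2 ^ n := by
  induction n with
  | zero => simp [CW]
  | succ n ih =>
    simp [CW, List.length_flatMap, ih, pow_succ]

open scoped Classical in
lemma CW_count_aux (x : ℝ) (hx : 0 ≤ x) (l : List ℚ) (hl : ∀ q ∈ l, 0 < q) :
    (l.flatMap (fun x => [x / (x + 1), x + 1])).countP (fun q : ℚ => decide ((q : ℝ) ≤ x + 1))
      = l.length + l.countP (fun q : ℚ => decide ((q : ℝ) ≤ x)) := by
  induction l with
  | nil => simp
  | cons a l ih =>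
    have ha : (0 : ℝ) < a := by exact_mod_cast hl a (by simp)
    have h1 : (a : ℝ) / (a + 1) ≤ x + 1 := by
      rw [div_le_iff₀ (by positivity)]
      nlinarith
    have := ih (fun q hq => hl q (by simp [hq]))
    simp only [List.flatMap_cons, List.countP_append, this, List.countP_cons, List.length_cons,
      List.countP_nil]
    push_cast
    simp only [h1, add_le_add_iff_right, decide_true, if_true]
    omega

open scoped Classical in
lemma Fcw_eq (n : ℕ) (x : ℝ) :
    Fcw n x = ((CW n).countP (fun q : ℚ => decide ((q : ℝ) ≤ x)) : ℕ) / 2 ^ n := by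
  unfold Fcw
  have h : (do let a ← CW n; pure (a : ℝ)) = (CW n).map (fun q : ℚ => (q : ℝ)) := by
    simp [List.map_eq_flatMap]
  rw [h, List.countP_map]
  rfl

lemma Fcw_succ (n : ℕ) (x : ℝ) (hx : 0 ≤ x) :
    Fcw (n + 1) (x + 1) = 1 / 2 + 1 / 2 * Fcw n x := by
  rw [Fcw_eq, Fcw_eq, CW, CW_count_aux x hx _ (CW_pos n), CW_length]
  push_cast
  field_simp
  ring

lemma Fcw_nonneg (n : ℕ) (x : ℝ) : 0 ≤ Fcw n x := by
  unfold Fcw; positivity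

lemma Fcw_le_one (n : ℕ) (x : ℝ) : Fcw n x ≤ 1 := by
  rw [Fcw_eq, div_le_one (by positivity)]
  have := CW_length n
  exact_mod_cast this ▸ List.countP_le_length

/-- The limit distribution function `F` of the Calkin–Wilf tree satisfies
`F(x + n) = 1 − 2^(−n) + 2^(−n)·F(x)` for all `x ≥ 0` and `n ∈ ℕ`; in
particular `1 − F(x) = O(2^(−x))` as `x → ∞`. -/
theorem calkin_wilf_limit_distribution_tail (F : ℝ → ℝ)
    (hF : ∀ x : ℝ, 0 ≤ x → Tendsto (fun n => Fcw n x) atTop (nhds (F x))) :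
    (∀ x : ℝ, 0 ≤ x → ∀ n : ℕ,
      F (x + n) = 1 - 2 ^ (-(n : ℤ)) + 2 ^ (-(n : ℤ)) * F x) ∧
    ∃ C : ℝ, 0 < C ∧ ∀ x : ℝ, 0 ≤ x → |1 - F x| ≤ C * (2 : ℝ) ^ (-x) := by
  have key : ∀ x : ℝ, 0 ≤ x → F (x + 1) = 1 / 2 + 1 / 2 * F x := by
    intro x hx
    have h1 := (tendsto_add_atTop_iff_nat 1).2 (hF (x + 1) (by positivity))
    have h2 := ((hF x hx).const_mul (1 / 2)).const_add (1 / 2)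
    refine tendsto_nhds_unique h1 (h2.congr fun n => (Fcw_succ n x hx).symm)
  have main : ∀ x : ℝ, 0 ≤ x → ∀ n : ℕ,
      F (x + n) = 1 - 2 ^ (-(n : ℤ)) + 2 ^ (-(n : ℤ)) * F x := by
    intro x hx n
    induction n with
    | zero => simp
    | succ n ih =>
      have h := key (x + n) (by positivity)
      rw [ih] at h
      push_cast
      rw [← add_assoc, h, neg_add, zpow_add₀ (by norm_num : (2 : ℝ) ≠ 0)]
      norm_num
      ring
  refine ⟨main, 2, by norm_num, fun x hx => ?_⟩
  have hfr := Int.fract_nonneg x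
  have hx' : Int.fract x + (⌊x⌋₊ : ℝ) = x := by
    rw [natCast_floor_eq_intCast_floor hx, Int.fract_add_floor]
  have h0 : 0 ≤ F (Int.fract x) := ge_of_tendsto' (hF _ hfr) fun n => Fcw_nonneg n _
  have h1 : F (Int.fract x) ≤ 1 := le_of_tendsto' (hF _ hfr) fun n => Fcw_le_one n _
  have hm := main _ hfr ⌊x⌋₊
  rw [hx'] at hm
  have hp : (0 : ℝ) < 2 ^ (-(⌊x⌋₊ : ℤ)) := by positivity
  have hb : (2 : ℝ) ^ (-(⌊x⌋₊ : ℤ)) ≤ 2 * (2 : ℝ) ^ (-x) := by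
    rw [← Real.rpow_intCast]
    calc (2 : ℝ) ^ (((-(⌊x⌋₊ : ℤ) : ℤ)) : ℝ) ≤ (2 : ℝ) ^ (1 + -x) := by
          apply Real.rpow_le_rpow_of_exponent_le (by norm_num)
          push_cast
          have := Nat.lt_floor_add_one x
          linarith
      _ = _ := by rw [Real.rpow_add (by norm_num), Real.rpow_one]
  rw [abs_of_nonneg] <;> rw [hm] <;> nlinarith
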